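/- For every N ≥ 2, the operators R_i := Id_V^{⊗(i−1)} ⊗ R ⊗ Id_V^{⊗(N−i−1)} on V^{⊗N} (1 ≤ i ≤ N−1) define an action of the Hecke algebra ℋ_N: they satisfy the braid relation R_i R_{i+1} R_i = R_{i+1} R_i R_{i+1} for 1 ≤ i ≤ N−2, the far commutation R_i R_j = R_j R_i for |i − j| ≥ 2, and the quadratic relation (R_i − q^{−1}·Id)(R_i + q·Id) = 0 for all i. -/

import Mathlib

set_option synthInstance.maxHeartbeats 400000
set_option maxHeartbeats 1000000

noncomputable section

/-- The base field `K = ℚ(q)`. -/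
abbrev K : Type := RatFunc ℚ

/-- The variable `q`. -/
def q : K := RatFunc.X

/-- The super sign `(-1)^{|i||j|}`, where the parity `|i|` of an index
`i : Fin (m+n)` (0-based) is `0` if `i < m` and `1` otherwise. -/
def sgn (m : ℕ) {M : ℕ} (i j : Fin M) : K :=
  if m ≤ (i : ℕ) ∧ m ≤ (j : ℕ) then -1 else 1

/-- The matrix (in the standard basis of `V ⊗ V`, `V = K^{m+n}`, indices 0-based)
of the `U_q(gl(m|n))` R-matrix: `R(eᵢ ⊗ eᵢ) = q⁻¹ eᵢ ⊗ eᵢ` for `i` of parity 0,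
`R(eᵢ ⊗ eᵢ) = -q eᵢ ⊗ eᵢ` for `i` of parity 1,
`R(eᵢ ⊗ eⱼ) = (-1)^{|i||j|} eⱼ ⊗ eᵢ` for `i < j`, and
`R(eᵢ ⊗ eⱼ) = (-1)^{|i||j|} eⱼ ⊗ eᵢ + (q⁻¹ - q) eᵢ ⊗ eⱼ` for `i > j`.
Entry `(p, r)` is the coefficient of `e_{p.1} ⊗ e_{p.2}` in `R(e_{r.1} ⊗ e_{r.2})`. -/
def Rmat (m n : ℕ) :
    Matrix (Fin (m + n) × Fin (m + n)) (Fin (m + n) × Fin (m + n)) K :=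
  fun p r =>
    if r.1 = r.2 then
      (if p = r then (if (r.1 : ℕ) < m then q⁻¹ else -q) else 0)
    else
      (if p.1 = r.2 ∧ p.2 = r.1 then sgn m r.1 r.2 else 0)
        + (if r.2 < r.1 ∧ p = r then q⁻¹ - q else 0)

/-- The Hecke operator `R_i = Id^{⊗i} ⊗ R ⊗ Id^{⊗(N-i-2)}` on `V^{⊗N}`
(0-based: it acts by `R` on tensor factors `i` and `i+1` and by the identity
elsewhere). -/
def Rop (m n N : ℕ) (i : ℕ) (h : i + 1 < N) :
    Matrix (Fin N → Fin (m + n)) (Fin N → Fin (m + n)) K :=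
  fun f g =>
    Rmat m n (f ⟨i, Nat.lt_of_succ_lt h⟩, f ⟨i + 1, h⟩)
        (g ⟨i, Nat.lt_of_succ_lt h⟩, g ⟨i + 1, h⟩) *
      ∏ t : Fin N, (if (t : ℕ) = i ∨ (t : ℕ) = i + 1 then 1
        else if f t = g t then 1 else 0)

def ca (m : ℕ) {M : ℕ} (x y : Fin M) : K := if x = y then 0 else sgn m x y

def cb (m : ℕ) {M : ℕ} (x y : Fin M) : K :=
  if x = y then (if (x : ℕ) < m then q⁻¹ else -q) else if y < x then q⁻¹ - q else 0

lemma ca_self (m : ℕ) {M : ℕ} (x : Fin M) : ca m x x = 0 := by simp [ca]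

lemma ca_comm (m : ℕ) {M : ℕ} (x y : Fin M) : ca m x y = ca m y x := by
  unfold ca sgn
  simp only [eq_comm (a := x), and_comm (a := m ≤ (x : ℕ))]

lemma ca_sq (m : ℕ) {M : ℕ} (x y : Fin M) (h : x ≠ y) : ca m x y * ca m x y = 1 := by
  unfold ca sgn
  rw [if_neg h]; split_ifs <;> ring

lemma q_ne : q ≠ 0 := RatFunc.X_ne_zero

lemma cb_self (m : ℕ) {M : ℕ} (x : Fin M) :
    cb m x x * cb m x x = (q⁻¹ - q) * cb m x x + 1 := by
  have := q_ne
  unfold cb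
  simp only [if_true]
  split_ifs <;> field_simp <;> ring

lemma cb_gt (m : ℕ) {M : ℕ} (x y : Fin M) (h : y < x) : cb m x y = q⁻¹ - q := by
  unfold cb; rw [if_neg h.ne', if_pos h]

lemma cb_lt (m : ℕ) {M : ℕ} (x y : Fin M) (h : x < y) : cb m x y = 0 := by
  unfold cb; rw [if_neg h.ne, if_neg h.not_gt]

lemma Rmat_eq (m n : ℕ) (x y z w : Fin (m + n)) :
    Rmat m n (x, y) (z, w) = (if x = w ∧ y = z then ca m z w else 0)
      + (if x = z ∧ y = w then cb m z w else 0) := by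
  unfold Rmat ca cb
  simp only [Prod.mk.injEq]
  split_ifs <;> simp_all

lemma Rop_eq (m n N i : ℕ) (h : i + 1 < N) (f g : Fin N → Fin (m + n)) :
    Rop m n N i h f g =
      (if f = g ∘ Equiv.swap ⟨i, Nat.lt_of_succ_lt h⟩ ⟨i + 1, h⟩ then
        ca m (g ⟨i, Nat.lt_of_succ_lt h⟩) (g ⟨i + 1, h⟩) else 0)
      + (if f = g then cb m (g ⟨i, Nat.lt_of_succ_lt h⟩) (g ⟨i + 1, h⟩) else 0) := by
  have hp : (∏ t : Fin N, (if (t : ℕ) = i ∨ (t : ℕ) = i + 1 then (1 : K)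
        else if f t = g t then 1 else 0)) =
      if (∀ t : Fin N, (t : ℕ) ≠ i → (t : ℕ) ≠ i + 1 → f t = g t) then 1 else 0 := by
    split_ifs with hh
    · apply Finset.prod_eq_one
      intro t _
      have := hh t
      split_ifs <;> simp_all
    · push Not at hh
      obtain ⟨t, h1, h2, h3⟩ := hh
      apply Finset.prod_eq_zero (Finset.mem_univ t)
      simp [h1, h2, h3]
  have e1 : (f = g ∘ Equiv.swap ⟨i, Nat.lt_of_succ_lt h⟩ ⟨i + 1, h⟩) ↔
      ((f ⟨i, Nat.lt_of_succ_lt h⟩ = g ⟨i + 1, h⟩ ∧ f ⟨i + 1, h⟩ = g ⟨i, Nat.lt_of_succ_lt h⟩) ∧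
      (∀ t : Fin N, (t : ℕ) ≠ i → (t : ℕ) ≠ i + 1 → f t = g t)) := by
    constructor
    · rintro rfl
      refine ⟨by simp, fun t h1 h2 => ?_⟩
      simp only [Function.comp]
      rw [Equiv.swap_apply_of_ne_of_ne] <;> simpa [Fin.ext_iff]
    · rintro ⟨⟨h1, h2⟩, h3⟩
      ext1 t
      simp only [Function.comp]
      by_cases a : t = ⟨i, Nat.lt_of_succ_lt h⟩
      · subst a; simpa using h1
      by_cases b : t = ⟨i + 1, h⟩
      · subst b; simpa using h2
      rw [Equiv.swap_apply_of_ne_of_ne a b]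
      exact h3 t (by simpa [Fin.ext_iff] using a) (by simpa [Fin.ext_iff] using b)
  have e2 : (f = g) ↔
      ((f ⟨i, Nat.lt_of_succ_lt h⟩ = g ⟨i, Nat.lt_of_succ_lt h⟩ ∧ f ⟨i + 1, h⟩ = g ⟨i + 1, h⟩) ∧
      (∀ t : Fin N, (t : ℕ) ≠ i → (t : ℕ) ≠ i + 1 → f t = g t)) := by
    constructor
    · rintro rfl
      simp
    · rintro ⟨⟨h1, h2⟩, h3⟩
      ext1 t
      by_cases a : t = ⟨i, Nat.lt_of_succ_lt h⟩
      · subst a; exact h1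
      by_cases b : t = ⟨i + 1, h⟩
      · subst b; exact h2
      exact h3 t (by simpa [Fin.ext_iff] using a) (by simpa [Fin.ext_iff] using b)
  unfold Rop
  rw [hp, Rmat_eq, if_congr e1 rfl rfl, if_congr e2 rfl rfl, add_mul, ite_and, ite_and]
  simp only [ite_and, mul_ite, mul_one, mul_zero, ite_mul, zero_mul]
  split_ifs <;> simp_all

lemma vm (m n N i : ℕ) (h : i + 1 < N) (v : (Fin N → Fin (m + n)) → K)
    (g : Fin N → Fin (m + n)) :
    Matrix.vecMul v (Rop m n N i h) g =
      ca m (g ⟨i, Nat.lt_of_succ_lt h⟩) (g ⟨i + 1, h⟩) *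
        v (g ∘ Equiv.swap ⟨i, Nat.lt_of_succ_lt h⟩ ⟨i + 1, h⟩)
      + cb m (g ⟨i, Nat.lt_of_succ_lt h⟩) (g ⟨i + 1, h⟩) * v g := by
  simp only [Matrix.vecMul, dotProduct, Rop_eq, mul_add, mul_ite, mul_zero,
    Finset.sum_add_distrib, Finset.sum_ite_eq', Finset.mem_univ, if_true]
  ring

lemma mat_ext {ι : Type*} [Fintype ι] [DecidableEq ι] (A B : Matrix ι ι K)
    (h : ∀ v g, Matrix.vecMul v A g = Matrix.vecMul v B g) : A = B := by
  ext i j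
  simpa using h (Pi.single i 1) j

lemma comp_swap_swap {N : ℕ} {α : Type*} (g : Fin N → α) (a b : Fin N) :
    (g ∘ Equiv.swap a b) ∘ Equiv.swap a b = g := by
  ext1 t; simp

lemma braid_swap {N : ℕ} {α : Type*} (g : Fin N → α) (a b c : Fin N) (hab : a ≠ b)
    (hbc : b ≠ c) (hac : a ≠ c) :
    ((g ∘ Equiv.swap a b) ∘ Equiv.swap b c) ∘ Equiv.swap a b =
      ((g ∘ Equiv.swap b c) ∘ Equiv.swap a b) ∘ Equiv.swap b c := by
  ext1 t
  simp only [Function.comp]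
  congr 1
  simp only [Equiv.swap_apply_def]
  split_ifs <;> simp_all

lemma comm_swap {N : ℕ} {α : Type*} (g : Fin N → α) (a b c d : Fin N) (hac : a ≠ c)
    (had : a ≠ d) (hbc : b ≠ c) (hbd : b ≠ d) :
    (g ∘ Equiv.swap a b) ∘ Equiv.swap c d = (g ∘ Equiv.swap c d) ∘ Equiv.swap a b := by
  ext1 t
  simp only [Function.comp]
  congr 1
  simp only [Equiv.swap_apply_def]
  split_ifs <;> simp_all

lemma quad_diag (m : ℕ) {M : ℕ} (x y : Fin M) :
    ca m x y * ca m y x + cb m x y * cb m x y = (q⁻¹ - q) * cb m x y + 1 := by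
  rcases lt_trichotomy x y with h | rfl | h
  · rw [ca_comm m y x, ca_sq m x y h.ne, cb_lt m x y h]; ring
  · rw [ca_self, cb_self]; ring
  · rw [ca_comm m y x, ca_sq m x y h.ne', cb_gt m x y h]; ring

lemma quad_off (m : ℕ) {M : ℕ} (x y : Fin M) :
    ca m x y * cb m y x + cb m x y * ca m x y = (q⁻¹ - q) * ca m x y := by
  rcases lt_trichotomy x y with h | rfl | h
  · rw [cb_lt m x y h, cb_gt m y x h]; ring
  · rw [ca_self]; ring
  · rw [cb_lt m y x h, cb_gt m x y h]; ring

lemma br_off (m : ℕ) {M : ℕ} (x y z : Fin M) :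
    ca m x y * (cb m x z * cb m y x + cb m y z * cb m x y) =
      ca m x y * (cb m y z * cb m x z) := by
  rcases lt_trichotomy x y with h | rfl | h
  · rw [cb_lt m x y h, cb_gt m y x h]
    rcases lt_trichotomy y z with h' | rfl | h'
    · rw [cb_lt m y z h', cb_lt m x z (h.trans h')]; ring
    · rw [cb_lt m x y h]; ring
    · rw [cb_gt m y z h']; ring
  · rw [ca_self]; ring
  · rw [cb_lt m y x h, cb_gt m x y h]
    rcases lt_trichotomy x z with h' | rfl | h'
    · rw [cb_lt m x z h', cb_lt m y z (h.trans h')]; ring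
    · rw [cb_lt m y x h]; ring
    · rw [cb_gt m x z h']; ring

lemma br_off' (m : ℕ) {M : ℕ} (x y z : Fin M) :
    ca m y z * (cb m x z * cb m z y + cb m x y * cb m y z) =
      ca m y z * (cb m x y * cb m x z) := by
  rcases lt_trichotomy y z with h | rfl | h
  · rw [cb_lt m y z h, cb_gt m z y h]
    rcases lt_trichotomy x y with h' | rfl | h'
    · rw [cb_lt m x y h', cb_lt m x z (h'.trans h)]; ring
    · rw [cb_lt m x z h]; ring
    · rw [cb_gt m x y h']; ring
  · rw [ca_self]; ring
  · rw [cb_lt m z y h, cb_gt m y z h]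
    rcases lt_trichotomy x z with h' | rfl | h'
    · rw [cb_lt m x z h', cb_lt m x y (h'.trans h)]; ring
    · rw [cb_lt m x y h]; ring
    · rw [cb_gt m x z h']; ring

lemma br_diag (m : ℕ) {M : ℕ} (x y z : Fin M) :
    ca m x y * ca m y x * cb m x z + cb m x y * cb m x y * cb m y z =
      ca m y z * ca m z y * cb m x z + cb m y z * cb m y z * cb m x y := by
  have h1 := quad_diag m x y
  have h2 := quad_diag m y z
  have key : cb m x z * ((q⁻¹ - q) * (cb m x y - cb m y z) - cb m x y * cb m x y
      + cb m y z * cb m y z) + cb m x y * cb m y z * (cb m x y - cb m y z) = 0 := by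
    rcases lt_trichotomy x y with h | rfl | h
    · rcases lt_trichotomy y z with h' | rfl | h'
      · rw [cb_lt m x y h, cb_lt m y z h']; ring
      · rw [cb_lt m x y h]; ring
      · rw [cb_lt m x y h, cb_gt m y z h']; ring
    · rcases lt_trichotomy x z with h' | rfl | h'
      · rw [cb_lt m x z h']; ring
      · ring
      · rw [cb_gt m x z h']; ring
    · rcases lt_trichotomy y z with h' | rfl | h'
      · rw [cb_gt m x y h, cb_lt m y z h']; ring
      · rw [cb_gt m x y h]; ring
      · rw [cb_gt m x y h, cb_gt m y z h']; ring
  linear_combination key + cb m x z * (h1 - h2)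

/-- The operators `R_i = Id^{⊗(i-1)} ⊗ R ⊗ Id^{⊗(N-i-1)}` on `V^{⊗N}` define an
action of the Hecke algebra `ℋ_N`: they satisfy the braid relation, the far
commutation relation, and the Hecke quadratic relation. -/
theorem hecke_algebra_action (m n N : ℕ) (hN : 2 ≤ N) :
    (∀ (i : ℕ) (h : i + 2 < N),
      Rop m n N i (by omega) * Rop m n N (i + 1) (by omega) * Rop m n N i (by omega)
        = Rop m n N (i + 1) (by omega) * Rop m n N i (by omega) * Rop m n N (i + 1) (by omega)) ∧
    (∀ (i j : ℕ) (hi : i + 1 < N) (hj : j + 1 < N), i + 2 ≤ j ∨ j + 2 ≤ i →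
      Rop m n N i hi * Rop m n N j hj = Rop m n N j hj * Rop m n N i hi) ∧
    (∀ (i : ℕ) (hi : i + 1 < N),
      (Rop m n N i hi - q⁻¹ • (1 : Matrix (Fin N → Fin (m + n)) (Fin N → Fin (m + n)) K))
        * (Rop m n N i hi + q • (1 : Matrix (Fin N → Fin (m + n)) (Fin N → Fin (m + n)) K)) = 0) := by
  refine ⟨?_, ?_, ?_⟩
  · intro i h
    apply mat_ext
    intro v g
    have n1 : (⟨i, by omega⟩ : Fin N) ≠ ⟨i + 1, by omega⟩ := by simp
    have n2 : (⟨i + 1, by omega⟩ : Fin N) ≠ ⟨i + 1 + 1, by omega⟩ := by simp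
    have n3 : (⟨i, by omega⟩ : Fin N) ≠ ⟨i + 1 + 1, by omega⟩ := by simp; omega
    simp only [← Matrix.vecMul_vecMul, vm]
    generalize (⟨i, _⟩ : Fin N) = a at *
    generalize (⟨i + 1, _⟩ : Fin N) = b at *
    generalize (⟨i + 1 + 1, _⟩ : Fin N) = c at *
    simp only [comp_swap_swap, braid_swap g a b c n1 n2 n3]
    simp only [Function.comp, Equiv.swap_apply_left, Equiv.swap_apply_right,
      Equiv.swap_apply_of_ne_of_ne n1 n3, Equiv.swap_apply_of_ne_of_ne n3.symm n2.symm]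
    have d := br_diag m (g a) (g b) (g c)
    have o1 := br_off m (g a) (g b) (g c)
    have o2 := br_off' m (g a) (g b) (g c)
    linear_combination (v g) * d + v (g ∘ Equiv.swap a b) * o1
      - v (g ∘ Equiv.swap b c) * o2
  · intro i j hi hj hij
    apply mat_ext
    intro v g
    have n1 : (⟨i, by omega⟩ : Fin N) ≠ ⟨j, by omega⟩ := by simp; omega
    have n2 : (⟨i, by omega⟩ : Fin N) ≠ ⟨j + 1, by omega⟩ := by simp; omega
    have n3 : (⟨i + 1, by omega⟩ : Fin N) ≠ ⟨j, by omega⟩ := by simp; omega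
    have n4 : (⟨i + 1, by omega⟩ : Fin N) ≠ ⟨j + 1, by omega⟩ := by simp; omega
    simp only [← Matrix.vecMul_vecMul, vm]
    generalize (⟨i, _⟩ : Fin N) = a at *
    generalize (⟨i + 1, _⟩ : Fin N) = b at *
    generalize (⟨j, _⟩ : Fin N) = c at *
    generalize (⟨j + 1, _⟩ : Fin N) = d at *
    rw [comm_swap g a b c d n1 n2 n3 n4]
    simp only [Function.comp, Equiv.swap_apply_of_ne_of_ne n1 n2,
      Equiv.swap_apply_of_ne_of_ne n3 n4, Equiv.swap_apply_of_ne_of_ne n1.symm n3.symm,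
      Equiv.swap_apply_of_ne_of_ne n2.symm n4.symm]
    ring
  · intro i hi
    have key : Rop m n N i hi * Rop m n N i hi = (q⁻¹ - q) • Rop m n N i hi + 1 := by
      apply mat_ext
      intro v g
      simp only [← Matrix.vecMul_vecMul, Matrix.vecMul_add, Matrix.vecMul_smul,
        Matrix.vecMul_one, Pi.add_apply, Pi.smul_apply, smul_eq_mul, vm]
      generalize (⟨i, _⟩ : Fin N) = a at *
      generalize (⟨i + 1, _⟩ : Fin N) = b at *
      simp only [comp_swap_swap]
      simp only [Function.comp, Equiv.swap_apply_left, Equiv.swap_apply_right]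
      have d := quad_diag m (g a) (g b)
      have o := quad_off m (g a) (g b)
      linear_combination (v g) * d + v (g ∘ Equiv.swap a b) * o
    have hq : q * q⁻¹ = 1 := mul_inv_cancel₀ q_ne
    rw [sub_mul, mul_add, mul_add, key]
    simp only [Matrix.smul_mul, Matrix.mul_smul, Matrix.one_mul, Matrix.mul_one, smul_smul, hq,
      sub_smul, one_smul]
    abel
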